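/- Let C be an abelian category. Then the category pro-C of pro-objects of C is an abelian category. -/

import Mathlib

/-!
STATEMENT 0: For an abelian category `C`, the category `pro-C` of pro-objects of `C`
is an abelian category.

Following the paper, `pro-C` has as objects formal cofiltered limits of diagrams in
`C` (equivalently, functors from small filtered index categories to `C`, regarded
contravariantly), with
`Hom(F₁, F₂) = liminv_{i₂ ∈ I₂} limdir_{i₁ ∈ I₁} Hom_C(F₁(i₁), F₂(i₂))`.
This category is (canonically equivalent to) the opposite of the category of
ind-objects of `Cᵒᵖ`: an ind-object of `Cᵒᵖ` is a formal filtered colimit of a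
diagram `F : I ⥤ Cᵒᵖ` (realized in Mathlib as a presheaf on `Cᵒᵖ` which is a
filtered colimit of representables), and the hom-sets of `Ind (Cᵒᵖ)` are exactly
`limdir_{i₂} liminv_{i₁} Hom_{Cᵒᵖ}(F₁ i₁, F₂ i₂)`, which dualizes to the formula
above.  We therefore define `ProCategory C := (Ind Cᵒᵖ)ᵒᵖ`.
-/

/-!
Abelianness is self-dual, so it suffices to show that `Ind D` is abelian for an abelian category
`D`, here without assuming that `D` is small.

An ind-object is a presheaf which is a filtered colimit of representables. Representables are left
exact and filtered colimits of types commute with finite limits, so ind-objects are left exact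
(`isIndObject_preservesFiniteLimits`). Left exact functors `Dᵒᵖ ⥤ Type v` lift uniquely to abelian
groups, hence `Ind D` is a full subcategory of the preadditive category of left exact functors
`Dᵒᵖ ⥤ AddCommGrpCat`, and is itself preadditive (`indPreadditive`). Kernels and cokernels exist
in `Ind D`. Finally, every morphism of `Ind D` is the ind-limit of a natural transformation of
diagrams `I ⥤ D` with `I` small and filtered; since `Ind.lim I` preserves finite limits and finite
colimits, and `I ⥤ D` is abelian, the comparison map from coimage to image is an isomorphism in
`Ind D` (`isIso_coimageImageComparison_ind`).
-/

open CategoryTheory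

universe v u

/-- The category of pro-objects of `C`: the opposite of the category of ind-objects
of `Cᵒᵖ`.  Its objects are formal cofiltered limits of objects of `C` (i.e. diagrams
indexed by small filtered categories, taken contravariantly), and its hom-sets are
`Hom(F₁, F₂) = liminv_{i₂ ∈ I₂} limdir_{i₁ ∈ I₁} Hom_C(F₁(i₁), F₂(i₂))`. -/
noncomputable def ProCategory (C : Type u) [Category.{v} C] : Type (max u (v + 1)) :=
  (Ind Cᵒᵖ)ᵒᵖ

noncomputable instance (C : Type u) [Category.{v} C] : Category.{v} (ProCategory C) :=
  inferInstanceAs (Category.{v} (Ind Cᵒᵖ)ᵒᵖ)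

open Limits in
/-- Ind-objects are left exact presheaves: finite limits of types commute with filtered colimits.
The category `D` need not be small. -/
theorem isIndObject_preservesFiniteLimits {D : Type u} [Category.{v} D]
    {A : Dᵒᵖ ⥤ Type v} (hA : IsIndObject A) : PreservesFiniteLimits A := by
  let P := hA.presentation
  have hflip : PreservesFiniteLimits (P.F ⋙ yoneda).flip := by
    refine ⟨fun J _ _ => preservesLimitsOfShape_of_evaluation _ _ fun i => ?_⟩
    exact inferInstanceAs (PreservesLimitsOfShape J (yoneda.obj (P.F.obj i)))
  have : PreservesFiniteLimits ((P.F ⋙ yoneda).flip ⋙ colim) :=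
    comp_preservesFiniteLimits _ _
  exact preservesFiniteLimits_of_natIso
    ((colimitIsoFlipCompColim (P.F ⋙ yoneda)).symm ≪≫
      (colimit.isColimit _).coconePointUniqueUpToIso P.coconeIsColimit)

/-- The fully faithful functor sending an ind-object to its underlying left exact presheaf. -/
noncomputable def indToLeftExact (D : Type u) [Category.{v} D] :
    Ind D ⥤ LeftExactFunctor Dᵒᵖ (Type v) :=
  (Ind.equivalence D).functor ⋙
    ObjectProperty.ιOfLE fun _ hA => isIndObject_preservesFiniteLimits hA

/-- The additive structure on `Ind D`, pulled back from the category of left exact functors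
`Dᵒᵖ ⥤ AddCommGrpCat`. -/
@[reducible]
noncomputable def indPreadditive (D : Type u) [Category.{v} D] [Abelian D] :
    Preadditive (Ind D) :=
  have : Limits.HasFiniteBiproducts Dᵒᵖ := .of_hasFiniteProducts
  .ofFullyFaithful
    (((Ind.equivalence D).fullyFaithfulFunctor.comp
      (ObjectProperty.fullyFaithfulιOfLE
        fun _ hA => isIndObject_preservesFiniteLimits hA) :
          (indToLeftExact D).FullyFaithful).comp
      ((AddCommGrpCat.leftExactFunctorForgetEquivalence Dᵒᵖ).symm.fullyFaithfulFunctor.comp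
        (ObjectProperty.fullyFaithfulι _)))

attribute [local instance] indPreadditive

instance (D : Type u) [Category.{v} D] [Abelian D] : Limits.HasFiniteBiproducts (Ind D) :=
  .of_hasFiniteCoproducts

open Abelian in
theorem isIso_coimageImageComparison_ind {D : Type u} [Category.{v} D] [Abelian D]
    {X Y : Ind D} (f : X ⟶ Y) : IsIso (coimageImageComparison f) := by
  obtain ⟨I, _, _, F, G, φ, ⟨i⟩⟩ := Ind.exists_nonempty_arrow_mk_iso_ind_lim (f := f)
  let i' : Arrow.mk (coimageImageComparison f) ≅
      Arrow.mk (coimageImageComparison ((Ind.lim I).map φ)) :=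
    coimageImageComparisonFunctor.mapIso i
  have := Iso.isIso_hom i'
  rw [Arrow.isIso_iff_isIso_of_isIso i'.hom,
    Arrow.isIso_iff_isIso_of_isIso (PreservesCoimageImageComparison.iso (Ind.lim I) φ).inv]
  infer_instance

/-- The category of ind-objects of a possibly large abelian category is abelian. -/
@[reducible]
noncomputable def indAbelian (D : Type u) [Category.{v} D] [Abelian D] : Abelian (Ind D) :=
  have : ∀ {X Y : Ind D} (f : X ⟶ Y), IsIso (Abelian.coimageImageComparison f) :=
    fun f => isIso_coimageImageComparison_ind f
  .ofCoimageImageComparisonIsIso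

/-- If `C` is an abelian category, then the category `pro-C` of
pro-objects of `C` is an abelian category. -/
theorem proCategory_abelian (C : Type u) [Category.{v} C] [Abelian C] :
    Nonempty (Abelian (ProCategory C)) := by
  let _ := indAbelian Cᵒᵖ
  exact ⟨(inferInstance : Abelian (Ind Cᵒᵖ)ᵒᵖ)⟩
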